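/- Let Ω ⊂ ℝ² be a bounded convex open set with C² boundary, let u ∈ Φ₀(Ω) ∩ C²(E_u) with u not identically zero, and let x ∈ Ω̄ be such that u(x) ∈ [0, max_{Ω̄} u). Then the anisotropic curvature k_H(x) of the level set {y ∈ Ω : u(y) = u(x)} at the point x satisfies k_H(x) = -H(∇u(x))⁻³ Σ_{i,j} S^{ij}(A[u](x)) F_{ξ_i}(∇u(x)) u_j(x), where S^{ij}(B) denotes the entries of the cofactor matrix of a 2×2 matrix B. -/

import Mathlib

/-!
Let `ξ = ∇u(x)`. By homogeneity `∇²F(ξ) ξ = ∇F(ξ)`, and `adj(∇²F D²u) ∇²F = det ∇²F · adj D²u`, so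
the sum on the right-hand side is `det ∇²F(ξ) · ⟨ξ, adj(D²u) ξ⟩`. The kernel of the symmetric matrix
`∇²H(ξ)` contains `ξ`, so its adjugate is a multiple of `ξ ξᵀ`; computing the determinant of
`∇²F = ∇H ∇Hᵀ + H ∇²H` with Euler's relation `∇H(ξ) · ξ = H(ξ)` identifies the factor as
`det ∇²F(ξ) / H(ξ)³`. Finally `tr(D²u ∇²H) = tr(adj D²u adj ∇²H)`, because the adjugate is an
anti-homomorphism which preserves the trace of `2 × 2` matrices.
-/

open MeasureTheory Set
open scoped ENNReal NNReal RealInnerProductSpace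

noncomputable section

/-- The plane `ℝ²`. -/
abbrev E2 : Type := EuclideanSpace ℝ (Fin 2)

/-- The `i`-th partial derivative of `f` at `x`. -/
def pd (f : E2 → ℝ) (i : Fin 2) (x : E2) : ℝ :=
  fderiv ℝ f x (EuclideanSpace.single i 1)

/-- The Hessian matrix of `f` at `x`. -/
def hessian (f : E2 → ℝ) (x : E2) : Matrix (Fin 2) (Fin 2) ℝ :=
  Matrix.of fun i j => pd (pd f j) i x

/-- The hypotheses on the anisotropy `H`: a convex, coercive, positively `1`-homogeneous even
function, with `H²` strongly convex and `C²` away from the origin. -/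
structure IsAnisoNorm (H : E2 → ℝ) : Prop where
  nonneg : ∀ ξ, 0 ≤ H ξ
  convex : ConvexOn ℝ Set.univ H
  coercive : ∃ α > 0, ∀ ξ, α * ‖ξ‖ ≤ H ξ
  homog : ∀ (t : ℝ) (ξ : E2), H (t • ξ) = |t| * H ξ
  smooth : ContDiffOn ℝ 2 H {(0 : E2)}ᶜ
  posdef : ∀ ξ : E2, ξ ≠ 0 → ∀ v : E2, v ≠ 0 →
      0 < ∑ i, ∑ j, hessian (fun z => H z ^ 2) ξ i j * v i * v j

/-- The polar function `H^o(v) = sup_{ξ ≠ 0} (ξ·v)/H(ξ)`. -/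
def polar (H : E2 → ℝ) (v : E2) : ℝ :=
  ⨆ ξ : {ξ : E2 // ξ ≠ 0}, ⟪(ξ : E2), v⟫ / H ξ

/-- The Wulff shape `𝒲 = {H^o < 1}`. -/
def Wulff (H : E2 → ℝ) : Set E2 := {ξ | polar H ξ < 1}

/-- The scaled Wulff shape `𝒲_R = {H^o < R}`. -/
def wulffR (H : E2 → ℝ) (R : ℝ) : Set E2 := {ξ | polar H ξ < R}

/-- `κ`, the Lebesgue measure of the Wulff shape. -/
def kappa (H : E2 → ℝ) : ℝ := (volume (Wulff H)).toReal

/-- `F(ξ) = H(ξ)²/2`. -/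
def Fani (H : E2 → ℝ) (ξ : E2) : ℝ := H ξ ^ 2 / 2

/-- The matrix `A[u] = ∇²_ξ F(∇u) · ∇²u`. -/
def Amat (H u : E2 → ℝ) (x : E2) : Matrix (Fin 2) (Fin 2) ℝ :=
  hessian (Fani H) (gradient u x) * hessian u x

/-- The anisotropic Monge–Ampère operator `det_H[u] = det ∇²_ξF(∇u) · det ∇²u`. -/
def detH (H u : E2 → ℝ) (x : E2) : ℝ :=
  (hessian (Fani H) (gradient u x)).det * (hessian u x).det

/-- The cofactor matrix of a `2×2` matrix. -/
def cof (B : Matrix (Fin 2) (Fin 2) ℝ) : Matrix (Fin 2) (Fin 2) ℝ :=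
  Matrix.of ![![B 1 1, -B 1 0], ![-B 0 1, B 0 0]]

/-- The anisotropic curvature of the level line of `u` through `x`:
`k_H(x) = -Σ_{i,j} H_{ξ_iξ_j}(∇u) u_{ij}`. -/
def kH (H u : E2 → ℝ) (x : E2) : ℝ :=
  -∑ i, ∑ j, hessian H (gradient u x) i j * hessian u x i j

/-- The class `Φ₀(Ω)`: `W^{2,2}(Ω) ∩ C¹(Ω̄)` functions vanishing on `∂Ω`, concave in `Ω`. -/
structure MemPhi0 (Ω : Set E2) (u : E2 → ℝ) : Prop where
  sobolev : ∀ i j, MemLp (fun x => hessian u x i j) 2 (volume.restrict Ω)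
  c1 : ContDiffOn ℝ 1 u (closure Ω)
  bzero : ∀ x ∈ frontier Ω, u x = 0
  concave : ConcaveOn ℝ Ω u

/-- `max_{Ω̄} u`. -/
def maxcl (Ω : Set E2) (u : E2 → ℝ) : ℝ := sSup (u '' closure Ω)

/-- The set `E_u = {x ∈ Ω : 0 ≤ u(x) < max_{Ω̄} u}`. -/
def Eu (Ω : Set E2) (u : E2 → ℝ) : Set E2 :=
  {x ∈ Ω | 0 ≤ u x ∧ u x < maxcl Ω u}

/-- `K` has `C²` boundary: it admits a global `C²` defining function with nonvanishing
gradient on the boundary. -/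
def HasC2Boundary (K : Set E2) : Prop :=
  ∃ φ : E2 → ℝ, ContDiff ℝ 2 φ ∧ K = {x | φ x < 0} ∧
    frontier K = {x | φ x = 0} ∧ ∀ x ∈ frontier K, gradient φ x ≠ 0

/-- `K` has `C¹` boundary. -/
def HasC1Boundary (K : Set E2) : Prop :=
  ∃ φ : E2 → ℝ, ContDiff ℝ 1 φ ∧ K = {x | φ x < 0} ∧
    frontier K = {x | φ x = 0} ∧ ∀ x ∈ frontier K, gradient φ x ≠ 0

/-- The Euclidean outer unit normal `ν = -∇u/|∇u|` to a superlevel set of `u`. -/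
def nuLevel (u : E2 → ℝ) (x : E2) : E2 := -(‖gradient u x‖⁻¹ • gradient u x)

/-- The level set `Σ_t = {u = t}` (in `Ω̄`). -/
def levelSet (Ω : Set E2) (u : E2 → ℝ) (t : ℝ) : Set E2 :=
  {x ∈ closure Ω | u x = t}

/-- The superlevel set `Ω_t = {u > t}`. -/
def superLevel (Ω : Set E2) (u : E2 → ℝ) (t : ℝ) : Set E2 :=
  {x ∈ Ω | t < u x}

/-- `λ_H(t) = P_H({u > t}) = ∫_{{u = t}} H(ν) dℋ¹`. -/
def lambdaH (H : E2 → ℝ) (Ω : Set E2) (u : E2 → ℝ) (t : ℝ) : ℝ :=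
  ∫ x in levelSet Ω u t, H (nuLevel u x) ∂(μH[1] : Measure E2)

/-- The anisotropic perimeter `P_H(Ω) = λ_H(0)` of `Ω = {u > 0}`. -/
def PerH (H : E2 → ℝ) (Ω : Set E2) (u : E2 → ℝ) : ℝ := lambdaH H Ω u 0

/-- The rearrangement `u^♦(s) = sup{t ≥ 0 : λ_H(t) ≥ s}` of `u` with respect to the
anisotropic perimeter. -/
def diamondRe (H : E2 → ℝ) (Ω : Set E2) (u : E2 → ℝ) (s : ℝ) : ℝ :=
  sSup {t : ℝ | 0 ≤ t ∧ s ≤ lambdaH H Ω u t}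

/-- The anisotropic radial symmetrand `u^★(x) = u^♦(2κ H^o(x))`. -/
def starRe (H : E2 → ℝ) (Ω : Set E2) (u : E2 → ℝ) (x : E2) : ℝ :=
  diamondRe H Ω u (2 * kappa H * polar H x)

/-- `Ω^★ = 𝒲_R` with `R = P_H(Ω)/(2κ)`. -/
def OmegaStar (H : E2 → ℝ) (Ω : Set E2) (u : E2 → ℝ) : Set E2 :=
  wulffR H (PerH H Ω u / (2 * kappa H))

/-- The distribution function `μ(t) = |{x ∈ Ω : |f(x)| > t}|`. -/
def distrib (Ω : Set E2) (f : E2 → ℝ) (t : ℝ) : ℝ :=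
  (volume {x ∈ Ω | t < |f x|}).toReal

/-- The decreasing rearrangement `f*(s) = sup{t : μ(t) > s}`. -/
def decRe (Ω : Set E2) (f : E2 → ℝ) (s : ℝ) : ℝ :=
  sSup {t : ℝ | s < distrib Ω f t}

open Matrix

section Homogeneous

variable {V W : Type*} [NormedAddCommGroup V] [NormedSpace ℝ V]
  [NormedAddCommGroup W] [NormedSpace ℝ W] {k : ℕ} {f : V → W}

/-- Positive homogeneity of degree `k`: `f (t x) = t ^ k f x` for all `t > 0`. Only positive
dilations are considered, so that nothing is required of `f` under `x ↦ -x`. -/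
def IsPosHomogeneous (k : ℕ) (f : V → W) : Prop :=
  ∀ ⦃t : ℝ⦄, 0 < t → ∀ x, f (t • x) = t ^ k • f x

namespace IsPosHomogeneous

theorem map_zero (hf : IsPosHomogeneous (k + 1) f) : f 0 = 0 := by
  have hdouble : f 0 = (2 : ℝ) ^ (k + 1) • f 0 := by simpa using hf two_pos 0
  have hpow : (2 : ℝ) ^ (k + 1) ≠ 1 := (one_lt_pow₀ one_lt_two k.succ_ne_zero).ne'
  by_contra h0
  exact hpow (smul_left_injective ℝ h0 (by simpa using hdouble.symm))

theorem fderiv_apply_self {x : V} (hf : IsPosHomogeneous k f) (hd : DifferentiableAt ℝ f x) :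
    fderiv ℝ f x x = (k : ℝ) • f x := by
  have hray : HasDerivAt (fun t : ℝ ↦ f (t • x)) (fderiv ℝ f x x) 1 := by
    have hfx : HasFDerivAt f (fderiv ℝ f x) ((1 : ℝ) • x) := by simpa using hd.hasFDerivAt
    exact hfx.comp_hasDerivAt 1 (by simpa using (hasDerivAt_id (1 : ℝ)).smul_const x)
  have hpow : HasDerivAt (fun t : ℝ ↦ t ^ k • f x) ((k : ℝ) • f x) 1 := by
    simpa using (hasDerivAt_pow k (1 : ℝ)).smul_const (f x)
  refine hray.unique (hpow.congr_of_eventuallyEq ?_)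
  filter_upwards [lt_mem_nhds one_pos] with t ht using hf ht x

theorem smul_fderiv_smul (hf : IsPosHomogeneous k f) {t : ℝ} (ht : 0 < t) (x : V) :
    t • fderiv ℝ f (t • x) = t ^ k • fderiv ℝ f x := by
  rw [← fderiv_comp_smul, funext fun y ↦ hf ht y]
  exact congr_fun (fderiv_const_smul_field (t ^ k)) x

protected theorem fderiv (hf : IsPosHomogeneous (k + 1) f) : IsPosHomogeneous k (fderiv ℝ f) := by
  intro t ht x
  refine smul_right_injective _ ht.ne' ?_
  simp only [hf.smul_fderiv_smul ht, smul_smul, pow_succ']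

theorem fderiv_zero (hf : IsPosHomogeneous 0 f) : fderiv ℝ f 0 = 0 := by
  have h := hf.smul_fderiv_smul two_pos 0
  rw [smul_zero, pow_zero, one_smul, two_smul] at h
  exact left_eq_add.mp h.symm

end IsPosHomogeneous

end Homogeneous

section Adjugate

theorem adjugate_mul_mul_self {n R : Type*} [Fintype n] [DecidableEq n] [CommRing R]
    (A B : Matrix n n R) : (A * B).adjugate * A = A.det • B.adjugate := by
  rw [adjugate_mul_distrib, Matrix.mul_assoc, adjugate_mul, Matrix.mul_smul, Matrix.mul_one]

theorem trace_adjugate_fin_two {R : Type*} [CommRing R] (A : Matrix (Fin 2) (Fin 2) R) :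
    A.adjugate.trace = A.trace := by
  simp [adjugate_fin_two, trace_fin_two, add_comm]

theorem trace_adjugate_mul_adjugate_fin_two {R : Type*} [CommRing R]
    (A B : Matrix (Fin 2) (Fin 2) R) : (A.adjugate * B.adjugate).trace = (A * B).trace := by
  rw [← adjugate_mul_distrib, trace_adjugate_fin_two, trace_mul_comm]

theorem det_smul_add_vecMulVec_fin_two {R : Type*} [CommRing R] (h : R)
    (C : Matrix (Fin 2) (Fin 2) R) (p q : Fin 2 → R) :
    (h • C + vecMulVec p q).det = h ^ 2 * C.det + h * (q ⬝ᵥ C.adjugate *ᵥ p) := by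
  simp only [det_fin_two, adjugate_fin_two, Matrix.add_apply, Matrix.smul_apply, vecMulVec_apply,
    smul_eq_mul, mulVec, dotProduct, Fin.sum_univ_two, of_apply, cons_val_zero, cons_val_one]
  ring

theorem exists_adjugate_eq_smul_vecMulVec {K : Type*} [Field K] {C : Matrix (Fin 2) (Fin 2) K}
    {v : Fin 2 → K} (hC : C.IsSymm) (hv : v ≠ 0) (hCv : C *ᵥ v = 0) :
    ∃ c : K, C.adjugate = c • vecMulVec v v := by
  have h0 : C 0 0 * v 0 + C 0 1 * v 1 = 0 := by simpa [mulVec, dotProduct] using congr_fun hCv 0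
  have h1 : C 0 1 * v 0 + C 1 1 * v 1 = 0 := by
    simpa [mulVec, dotProduct, hC.apply 0 1] using congr_fun hCv 1
  have hrow (i a b : Fin 2) : C.adjugate a b * v i = C.adjugate a i * v b := by
    fin_cases i <;> fin_cases a <;> fin_cases b <;>
      simp [adjugate_fin_two, hC.apply 0 1] <;> grind
  have hsymm : C.adjugate.IsSymm := by rw [IsSymm, adjugate_transpose, hC.eq]
  obtain ⟨i, hi⟩ : ∃ i, v i ≠ 0 := Function.ne_iff.mp hv
  refine ⟨C.adjugate i i / v i ^ 2, ?_⟩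
  ext a b
  rw [Matrix.smul_apply, vecMulVec_apply, smul_eq_mul, div_mul_eq_mul_div,
    eq_div_iff (pow_ne_zero 2 hi)]
  calc C.adjugate a b * v i ^ 2 = C.adjugate a b * v i * v i := by ring
    _ = C.adjugate i a * v i * v b := by rw [hrow i a b, hsymm.apply i a]; ring
    _ = C.adjugate i i * (v a * v b) := by rw [hrow i i a]; ring

theorem cof_eq_transpose_adjugate (B : Matrix (Fin 2) (Fin 2) ℝ) : cof B = B.adjugateᵀ := by
  ext i j
  fin_cases i <;> fin_cases j <;> simp [cof, adjugate_fin_two]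

theorem sum_cof_mul_mul (B : Matrix (Fin 2) (Fin 2) ℝ) (v w : Fin 2 → ℝ) :
    ∑ i, ∑ j, cof B i j * v i * w j = w ⬝ᵥ B.adjugate *ᵥ v := by
  simp only [cof_eq_transpose_adjugate, transpose_apply, dotProduct, mulVec, Finset.mul_sum]
  rw [Finset.sum_comm]
  simp only [mul_comm (w _)]

end Adjugate

section PartialDerivatives

variable {f : E2 → ℝ} {x : E2}

theorem gradient_apply (f : E2 → ℝ) (x : E2) (i : Fin 2) : gradient f x i = pd f i x := by
  rw [pd, ← inner_gradient_left, EuclideanSpace.inner_single_right]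
  simp

theorem gradient_dotProduct {ι : Type*} [Fintype ι] (f : EuclideanSpace ℝ ι → ℝ)
    (x v : EuclideanSpace ℝ ι) :
    (gradient f x).ofLp ⬝ᵥ v.ofLp = fderiv ℝ f x v := by
  rw [← inner_gradient_left, EuclideanSpace.inner_eq_star_dotProduct, dotProduct_comm]
  rfl

theorem differentiableAt_fderiv {V W : Type*} [NormedAddCommGroup V] [NormedSpace ℝ V]
    [NormedAddCommGroup W] [NormedSpace ℝ W] {f : V → W} {x : V} (hf : ContDiffAt ℝ 2 f x) :
    DifferentiableAt ℝ (fderiv ℝ f) x :=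
  (hf.fderiv_right (m := 1) (by norm_num)).differentiableAt one_ne_zero

theorem hessian_apply (hf : ContDiffAt ℝ 2 f x) (i j : Fin 2) :
    hessian f x i j = fderiv ℝ (fderiv ℝ f) x (.single i 1) (.single j 1) := by
  change fderiv ℝ (fun z ↦ fderiv ℝ f z (.single j 1)) x _ = _
  rw [fderiv_clm_apply (differentiableAt_fderiv hf) (differentiableAt_const _)]
  simp

theorem isSymm_hessian (hf : ContDiffAt ℝ 2 f x) : (hessian f x).IsSymm := by
  refine IsSymm.ext fun i j ↦ ?_
  rw [hessian_apply hf, hessian_apply hf]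
  exact hf.isSymmSndFDerivAt (by simp) _ _

theorem hessian_mulVec (hf : ContDiffAt ℝ 2 f x) (v : E2) (i : Fin 2) :
    (hessian f x *ᵥ v.ofLp) i = fderiv ℝ (fderiv ℝ f) x (.single i 1) v := by
  have hv : v = ∑ j, v j • EuclideanSpace.single j (1 : ℝ) := by
    simpa using ((EuclideanSpace.basisFun (Fin 2) ℝ).sum_repr v).symm
  conv_rhs => rw [hv]
  simp [mulVec, dotProduct, hessian_apply hf, mul_comm]

theorem gradient_Fani {H : E2 → ℝ} (hH : DifferentiableAt ℝ H x) :
    gradient (Fani H) x = H x • gradient H x := by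
  have hF : HasFDerivAt (Fani H) (H x • fderiv ℝ H x) x := by
    refine ((hH.hasFDerivAt.pow 2).mul_const (1 / 2 : ℝ)).congr_fderiv ?_ |>.congr_of_eventuallyEq
      (.of_forall fun z ↦ by simp [Fani, div_eq_mul_inv])
    ext v
    simp only [one_div, Nat.add_one_sub_one, pow_one, nsmul_eq_mul, Nat.cast_ofNat,
      _root_.smul_apply, smul_eq_mul]
    ring
  rw [gradient, hF.fderiv, map_smul]
  rfl

theorem hessian_Fani {H : E2 → ℝ} (hH : ContDiffAt ℝ 2 H x) :
    hessian (Fani H) x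
      = H x • hessian H x + vecMulVec (gradient H x).ofLp (gradient H x).ofLp := by
  ext i j
  have hev : pd (Fani H) j =ᶠ[nhds x] fun z ↦ H z * pd H j z := by
    filter_upwards [hH.eventually (by simp)] with z hz
    simp [← gradient_apply, gradient_Fani (hz.differentiableAt two_ne_zero)]
  have hpd : DifferentiableAt ℝ (pd H j) x :=
    (differentiableAt_fderiv hH).clm_apply (differentiableAt_const _)
  have hprod := (hH.differentiableAt two_ne_zero).hasFDerivAt.mul hpd.hasFDerivAt
  simp only [hessian, of_apply, Matrix.add_apply, Matrix.smul_apply, vecMulVec_apply,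
    gradient_apply]
  rw [pd, (hprod.congr_of_eventuallyEq hev).fderiv]
  simp [pd, mul_comm]

end PartialDerivatives

namespace IsPosHomogeneous

variable {k : ℕ} {f : E2 → ℝ} {x : E2}

theorem hessian_mulVec_self (hf : IsPosHomogeneous (k + 1) f) (hd : ContDiffAt ℝ 2 f x) :
    hessian f x *ᵥ x.ofLp = (k : ℝ) • (gradient f x).ofLp := by
  ext i
  rw [hessian_mulVec hd, (hd.isSymmSndFDerivAt (by simp)).eq,
    hf.fderiv.fderiv_apply_self (differentiableAt_fderiv hd)]
  simp [gradient_apply, pd]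

-- Unless `pd f j` is constant, it is not differentiable at `0` and its `fderiv` there is junk.
theorem hessian_zero (hf : IsPosHomogeneous 1 f) : hessian f 0 = 0 := by
  ext i j
  have hpd : IsPosHomogeneous 0 (pd f j) := fun t ht x ↦ by simp [pd, hf.fderiv ht x]
  simp [hessian, pd, hpd.fderiv_zero]

protected theorem Fani (hf : IsPosHomogeneous k f) : IsPosHomogeneous (2 * k) (Fani f) := by
  intro t ht x
  simp only [Fani, hf ht x, smul_eq_mul]
  ring

end IsPosHomogeneous

section Curvature

variable {H u : E2 → ℝ} {x ξ : E2}

theorem adjugate_hessian (hH : IsPosHomogeneous 1 H) (hd : ContDiffAt ℝ 2 H ξ)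
    (hξ : H ξ ≠ 0) :
    (hessian H ξ).adjugate
      = ((hessian (Fani H) ξ).det / H ξ ^ 3) • vecMulVec ξ.ofLp ξ.ofLp := by
  have hξ0 : ξ.ofLp ≠ 0 := fun h ↦ hξ (by rw [(WithLp.ofLp_eq_zero 2).mp h, hH.map_zero])
  have hker : hessian H ξ *ᵥ ξ.ofLp = 0 := by simpa using hH.hessian_mulVec_self hd
  have hdet : (hessian H ξ).det = 0 := exists_mulVec_eq_zero_iff.mp ⟨_, hξ0, hker⟩
  have heuler : (gradient H ξ).ofLp ⬝ᵥ ξ.ofLp = H ξ := by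
    rw [gradient_dotProduct, hH.fderiv_apply_self (hd.differentiableAt two_ne_zero), Nat.cast_one,
      one_smul]
  obtain ⟨c, hc⟩ := exists_adjugate_eq_smul_vecMulVec (isSymm_hessian hd) hξ0 hker
  have hdetF : (hessian (Fani H) ξ).det = c * H ξ ^ 3 := by
    rw [hessian_Fani hd, det_smul_add_vecMulVec_fin_two, hdet, hc, smul_mulVec, vecMulVec_mulVec,
      dotProduct_comm ξ.ofLp, heuler, op_smul_eq_smul, dotProduct_smul, dotProduct_smul, heuler,
      smul_eq_mul, smul_eq_mul]
    ring
  rw [hdetF, mul_div_cancel_right₀ _ (pow_ne_zero 3 hξ), hc]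

theorem kH_eq_neg_trace (hd : ContDiffAt ℝ 2 H (gradient u x)) :
    kH H u x = -(hessian u x * hessian H (gradient u x)).trace := by
  conv_rhs => rw [← (isSymm_hessian hd).eq, ← sum_hadamard_eq]
  simp only [kH, hadamard_apply, mul_comm]

theorem kH_eq_det_mul_dotProduct (hH : IsPosHomogeneous 1 H)
    (hd : ContDiffAt ℝ 2 H (gradient u x)) (hξ : H (gradient u x) ≠ 0) :
    kH H u x = -((hessian (Fani H) (gradient u x)).det / H (gradient u x) ^ 3 *
      ((gradient u x).ofLp ⬝ᵥ (hessian u x).adjugate *ᵥ (gradient u x).ofLp)) := by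
  rw [kH_eq_neg_trace hd, ← trace_adjugate_mul_adjugate_fin_two, adjugate_hessian hH hd hξ,
    Matrix.mul_smul, trace_smul, mul_vecMulVec, trace_vecMulVec, dotProduct_comm, smul_eq_mul]

theorem sum_cof_Amat_mul_mul (hH : IsPosHomogeneous 1 H)
    (hd : ContDiffAt ℝ 2 H (gradient u x)) :
    ∑ i, ∑ j, cof (Amat H u x) i j * pd (Fani H) i (gradient u x) * pd u j x
      = (hessian (Fani H) (gradient u x)).det *
        ((gradient u x).ofLp ⬝ᵥ (hessian u x).adjugate *ᵥ (gradient u x).ofLp) := by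
  have hgrad : hessian (Fani H) (gradient u x) *ᵥ (gradient u x).ofLp
      = (gradient (Fani H) (gradient u x)).ofLp := by
    simpa using hH.Fani.hessian_mulVec_self (k := 1) ((hd.pow 2).div_const 2)
  simp only [← gradient_apply, sum_cof_mul_mul]
  rw [← hgrad, mulVec_mulVec, Amat, adjugate_mul_mul_self, smul_mulVec, dotProduct_smul,
    smul_eq_mul]

theorem aniso_curvature_formula_general (hH : IsPosHomogeneous 1 H)
    (hd : ContDiffAt ℝ 2 H (gradient u x)) (hξ : H (gradient u x) ≠ 0) :
    kH H u x
      = -(H (gradient u x) ^ 3)⁻¹ *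
          ∑ i, ∑ j, cof (Amat H u x) i j * pd (Fani H) i (gradient u x) * pd u j x := by
  rw [kH_eq_det_mul_dotProduct hH hd hξ, sum_cof_Amat_mul_mul hH hd]
  ring

end Curvature

namespace IsAnisoNorm

variable {H : E2 → ℝ} {ξ : E2}

theorem isPosHomogeneous (hH : IsAnisoNorm H) : IsPosHomogeneous 1 H := fun t ht ξ ↦ by
  rw [hH.homog, abs_of_pos ht, pow_one, smul_eq_mul]

theorem pos (hH : IsAnisoNorm H) (hξ : ξ ≠ 0) : 0 < H ξ := by
  obtain ⟨α, hα, hle⟩ := hH.coercive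
  exact (mul_pos hα (norm_pos_iff.mpr hξ)).trans_le (hle ξ)

theorem contDiffAt (hH : IsAnisoNorm H) (hξ : ξ ≠ 0) : ContDiffAt ℝ 2 H ξ :=
  hH.smooth.contDiffAt (isOpen_compl_singleton.mem_nhds hξ)

end IsAnisoNorm

/-- for `u ∈ Φ₀(Ω) ∩ C²(E_u)`, `u ≢ 0`, and `x ∈ Ω̄` with
`0 ≤ u(x) < max_{Ω̄} u`, the anisotropic curvature of the level line of `u` through `x`
satisfies `k_H(x) = -H(∇u(x))⁻³ Σ_{i,j} S^{ij}(A[u](x)) F_{ξ_i}(∇u(x)) u_j(x)`. -/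
theorem aniso_curvature_formula
    (H : E2 → ℝ) (hH : IsAnisoNorm H)
    (Ω : Set E2) (hΩo : IsOpen Ω) (hΩb : Bornology.IsBounded Ω) (hΩc : Convex ℝ Ω)
    (hΩbd : HasC2Boundary Ω)
    (u : E2 → ℝ) (hu : MemPhi0 Ω u) (hu2 : ContDiffOn ℝ 2 u (Eu Ω u))
    (hune : ∃ x ∈ Ω, u x ≠ 0)
    (x : E2) (hx : x ∈ closure Ω) (hx0 : 0 ≤ u x) (hxM : u x < maxcl Ω u) :
    kH H u x
      = -(H (gradient u x) ^ 3)⁻¹ *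
          ∑ i, ∑ j, cof (Amat H u x) i j * pd (Fani H) i (gradient u x) * pd u j x := by
  -- `gradient u x` is `0` at points of `∂Ω` where `u`, unconstrained outside `closure Ω`, is not
  -- differentiable; both sides of the formula vanish there.
  rcases eq_or_ne (gradient u x) 0 with hg | hg
  · simp [kH, ← gradient_apply, hg, hH.isPosHomogeneous.hessian_zero]
  · exact aniso_curvature_formula_general hH.isPosHomogeneous (hH.contDiffAt hg) (hH.pos hg).ne'
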